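/- Let A be a differential graded Poisson algebra over a field k. Then A^e ≅ A^E as differential graded algebras. Explicitly, the map α : A^e → A^E determined by α(m_a) = class of a#1 and α(h_a) = class of 1#a is a well-defined differential graded algebra isomorphism, with inverse β induced by β(a#f) = m_a·h̃(f), where h̃ : U(A) → A^e is the differential graded algebra map induced by the DG Lie algebra map a ↦ h_a. -/

import Mathlib

open scoped TensorProduct

noncomputable section

namespace DGPaper

universe u

/-- A differential graded Lie algebra structure on a `k`-vector space `V`. -/
structure DGLAOn (k : Type u) [Field k] (V : Type u) [AddCommGroup V] [Module k V] where
  gr : ℤ → Submodule k V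
  decomp : DirectSum.Decomposition gr
  br : V →ₗ[k] V →ₗ[k] V
  br_mem : ∀ {i j : ℤ} {a b : V}, a ∈ gr i → b ∈ gr j → br a b ∈ gr (i + j)
  br_antisymm : ∀ {i j : ℤ} {a b : V}, a ∈ gr i → b ∈ gr j →
    br a b = -(((-1 : k) ^ (i * j)) • br b a)
  br_jacobi : ∀ {i j l : ℤ} {a b c : V}, a ∈ gr i → b ∈ gr j → c ∈ gr l →
    br a (br b c) = br (br a b) c + ((-1 : k) ^ (i * j)) • br b (br a c)
  d : V →ₗ[k] V
  d_mem : ∀ {i : ℤ} {a : V}, a ∈ gr i → d a ∈ gr (i + 1)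
  d_sq : ∀ a : V, d (d a) = 0
  d_br : ∀ {i j : ℤ} {a b : V}, a ∈ gr i → b ∈ gr j →
    d (br a b) = br (d a) b + ((-1 : k) ^ i) • br a (d b)

/-- A differential graded (associative, unital) algebra structure on a `k`-vector space `N`. -/
structure DGAOn (k : Type u) [Field k] (N : Type u) [AddCommGroup N] [Module k N] where
  gr : ℤ → Submodule k N
  decomp : DirectSum.Decomposition gr
  mul : N →ₗ[k] N →ₗ[k] N
  one : N
  one_mem : one ∈ gr 0
  mul_mem : ∀ {i j : ℤ} {a b : N}, a ∈ gr i → b ∈ gr j → mul a b ∈ gr (i + j)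
  mul_assoc : ∀ a b c : N, mul (mul a b) c = mul a (mul b c)
  one_mul : ∀ a : N, mul one a = a
  mul_one : ∀ a : N, mul a one = a
  d : N →ₗ[k] N
  d_mem : ∀ {i : ℤ} {a : N}, a ∈ gr i → d a ∈ gr (i + 1)
  d_sq : ∀ a : N, d (d a) = 0
  d_mul : ∀ {i j : ℤ} {a b : N}, a ∈ gr i → b ∈ gr j →
    d (mul a b) = mul (d a) b + ((-1 : k) ^ i) • mul a (d b)

/-- A differential graded Poisson algebra structure on a `k`-vector space `M`. -/
structure DGPAOn (k : Type u) [Field k] (M : Type u) [AddCommGroup M] [Module k M] where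
  gr : ℤ → Submodule k M
  decomp : DirectSum.Decomposition gr
  mul : M →ₗ[k] M →ₗ[k] M
  one : M
  one_mem : one ∈ gr 0
  mul_mem : ∀ {i j : ℤ} {a b : M}, a ∈ gr i → b ∈ gr j → mul a b ∈ gr (i + j)
  mul_assoc : ∀ a b c : M, mul (mul a b) c = mul a (mul b c)
  one_mul : ∀ a : M, mul one a = a
  mul_one : ∀ a : M, mul a one = a
  mul_comm : ∀ {i j : ℤ} {a b : M}, a ∈ gr i → b ∈ gr j →
    mul a b = ((-1 : k) ^ (i * j)) • mul b a
  br : M →ₗ[k] M →ₗ[k] M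
  br_mem : ∀ {i j : ℤ} {a b : M}, a ∈ gr i → b ∈ gr j → br a b ∈ gr (i + j)
  br_antisymm : ∀ {i j : ℤ} {a b : M}, a ∈ gr i → b ∈ gr j →
    br a b = -(((-1 : k) ^ (i * j)) • br b a)
  br_jacobi : ∀ {i j l : ℤ} {a b c : M}, a ∈ gr i → b ∈ gr j → c ∈ gr l →
    br a (br b c) = br (br a b) c + ((-1 : k) ^ (i * j)) • br b (br a c)
  br_deriv : ∀ {i j l : ℤ} {a b c : M}, a ∈ gr i → b ∈ gr j → c ∈ gr l →
    br a (mul b c) = mul (br a b) c + ((-1 : k) ^ (i * j)) • mul b (br a c)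
  d : M →ₗ[k] M
  d_mem : ∀ {i : ℤ} {a : M}, a ∈ gr i → d a ∈ gr (i + 1)
  d_sq : ∀ a : M, d (d a) = 0
  d_br : ∀ {i j : ℤ} {a b : M}, a ∈ gr i → b ∈ gr j →
    d (br a b) = br (d a) b + ((-1 : k) ^ i) • br a (d b)
  d_mul : ∀ {i j : ℤ} {a b : M}, a ∈ gr i → b ∈ gr j →
    d (mul a b) = mul (d a) b + ((-1 : k) ^ i) • mul a (d b)

section Defs

variable {k : Type u} [Field k]

/-- The differential graded Lie algebra underlying a differential graded Poisson algebra. -/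
def DGPAOn.toLie {M : Type u} [AddCommGroup M] [Module k M] (P : DGPAOn k M) :
    DGLAOn k M where
  gr := P.gr
  decomp := P.decomp
  br := P.br
  br_mem := P.br_mem
  br_antisymm := P.br_antisymm
  br_jacobi := P.br_jacobi
  d := P.d
  d_mem := P.d_mem
  d_sq := P.d_sq
  d_br := P.d_br

section Maps

variable {M N : Type u} [AddCommGroup M] [Module k M] [AddCommGroup N] [Module k N]

/-- A morphism of differential graded algebras (degree-0, multiplicative, unital,
commuting with the differentials). -/
def IsDGAHom (E : DGAOn k M) (F : DGAOn k N) (f : M →ₗ[k] N) : Prop :=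
  (∀ {n : ℤ} {x : M}, x ∈ E.gr n → f x ∈ F.gr n) ∧
  (∀ x y : M, f (E.mul x y) = F.mul (f x) (f y)) ∧
  f E.one = F.one ∧
  ∀ x : M, f (E.d x) = F.d (f x)

/-- A morphism of differential graded Poisson algebras. -/
def IsDGPAHom (P : DGPAOn k M) (Q : DGPAOn k N) (f : M →ₗ[k] N) : Prop :=
  (∀ {n : ℤ} {x : M}, x ∈ P.gr n → f x ∈ Q.gr n) ∧
  (∀ x y : M, f (P.mul x y) = Q.mul (f x) (f y)) ∧
  f P.one = Q.one ∧
  (∀ x : M, f (P.d x) = Q.d (f x)) ∧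
  ∀ x y : M, f (P.br x y) = Q.br (f x) (f y)

end Maps

section Tensor

variable {A B : Type u} [AddCommGroup A] [Module k A] [AddCommGroup B] [Module k B]

/-- `R` is the tensor product differential graded Poisson algebra structure on `A ⊗[k] B`
induced by `P` and `Q`. -/
def IsTensorDGPA (P : DGPAOn k A) (Q : DGPAOn k B) (R : DGPAOn k (A ⊗[k] B)) : Prop :=
  (∀ n : ℤ, R.gr n = Submodule.span k {z : A ⊗[k] B |
      ∃ (i j : ℤ) (a : A) (b : B), i + j = n ∧ a ∈ P.gr i ∧ b ∈ Q.gr j ∧ z = a ⊗ₜ[k] b}) ∧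
  R.one = P.one ⊗ₜ[k] Q.one ∧
  (∀ {i j i' j' : ℤ} {a a' : A} {b b' : B},
      a ∈ P.gr i → b ∈ Q.gr j → a' ∈ P.gr i' → b' ∈ Q.gr j' →
    R.mul (a ⊗ₜ[k] b) (a' ⊗ₜ[k] b') = ((-1 : k) ^ (i' * j)) • (P.mul a a' ⊗ₜ[k] Q.mul b b')) ∧
  (∀ {i j : ℤ} {a : A} {b : B}, a ∈ P.gr i → b ∈ Q.gr j →
    R.d (a ⊗ₜ[k] b) = P.d a ⊗ₜ[k] b + ((-1 : k) ^ i) • (a ⊗ₜ[k] Q.d b)) ∧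
  (∀ {i j i' j' : ℤ} {a a' : A} {b b' : B},
      a ∈ P.gr i → b ∈ Q.gr j → a' ∈ P.gr i' → b' ∈ Q.gr j' →
    R.br (a ⊗ₜ[k] b) (a' ⊗ₜ[k] b') =
      ((-1 : k) ^ (i' * j)) • (P.br a a' ⊗ₜ[k] Q.mul b b' + P.mul a a' ⊗ₜ[k] Q.br b b'))

/-- `G` is the tensor product differential graded algebra structure on `A ⊗[k] B`
induced by `E` and `F` (with the Koszul sign rule). -/
def IsTensorDGA (E : DGAOn k A) (F : DGAOn k B) (G : DGAOn k (A ⊗[k] B)) : Prop :=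
  (∀ n : ℤ, G.gr n = Submodule.span k {z : A ⊗[k] B |
      ∃ (i j : ℤ) (x : A) (y : B), i + j = n ∧ x ∈ E.gr i ∧ y ∈ F.gr j ∧ z = x ⊗ₜ[k] y}) ∧
  G.one = E.one ⊗ₜ[k] F.one ∧
  (∀ {i j i' j' : ℤ} {x x' : A} {y y' : B},
      x ∈ E.gr i → y ∈ F.gr j → x' ∈ E.gr i' → y' ∈ F.gr j' →
    G.mul (x ⊗ₜ[k] y) (x' ⊗ₜ[k] y') = ((-1 : k) ^ (i' * j)) • (E.mul x x' ⊗ₜ[k] F.mul y y')) ∧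
  (∀ {i j : ℤ} {x : A} {y : B}, x ∈ E.gr i → y ∈ F.gr j →
    G.d (x ⊗ₜ[k] y) = E.d x ⊗ₜ[k] y + ((-1 : k) ^ i) • (x ⊗ₜ[k] F.d y))

end Tensor

section Env

variable {M : Type u} [AddCommGroup M] [Module k M]

/-- The defining relations of the universal enveloping algebra `A^e` of a differential
graded Poisson algebra, imposed on the tensor algebra of `M × M`; the first copy of `M`
gives the generators `m_a`, the second copy the generators `h_a`. -/
inductive EnvRel (P : DGPAOn k M) :
    TensorAlgebra k (M × M) → TensorAlgebra k (M × M) → Prop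
  | relone : EnvRel P (TensorAlgebra.ι k ((P.one, 0) : M × M)) 1
  | relmul (a b : M) :
      EnvRel P (TensorAlgebra.ι k ((P.mul a b, 0) : M × M))
        (TensorAlgebra.ι k ((a, 0) : M × M) * TensorAlgebra.ι k ((b, 0) : M × M))
  | relhmul {i j : ℤ} {a b : M} (ha : a ∈ P.gr i) (hb : b ∈ P.gr j) :
      EnvRel P (TensorAlgebra.ι k ((0, P.mul a b) : M × M))
        (TensorAlgebra.ι k ((a, 0) : M × M) * TensorAlgebra.ι k ((0, b) : M × M) +
          ((-1 : k) ^ (i * j)) •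
            (TensorAlgebra.ι k ((b, 0) : M × M) * TensorAlgebra.ι k ((0, a) : M × M)))
  | relmbr {i j : ℤ} {a b : M} (ha : a ∈ P.gr i) (hb : b ∈ P.gr j) :
      EnvRel P (TensorAlgebra.ι k ((P.br a b, 0) : M × M))
        (TensorAlgebra.ι k ((0, a) : M × M) * TensorAlgebra.ι k ((b, 0) : M × M) -
          ((-1 : k) ^ (i * j)) •
            (TensorAlgebra.ι k ((b, 0) : M × M) * TensorAlgebra.ι k ((0, a) : M × M)))
  | relhbr {i j : ℤ} {a b : M} (ha : a ∈ P.gr i) (hb : b ∈ P.gr j) :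
      EnvRel P (TensorAlgebra.ι k ((0, P.br a b) : M × M))
        (TensorAlgebra.ι k ((0, a) : M × M) * TensorAlgebra.ι k ((0, b) : M × M) -
          ((-1 : k) ^ (i * j)) •
            (TensorAlgebra.ι k ((0, b) : M × M) * TensorAlgebra.ι k ((0, a) : M × M)))

/-- The universal enveloping algebra `A^e` of a differential graded Poisson algebra,
as a quotient of the tensor algebra on two copies of `A`. -/
abbrev Env (P : DGPAOn k M) : Type u := RingQuot (EnvRel P)

/-- The generators `m_a` of `A^e`. -/
def mgen (P : DGPAOn k M) : M →ₗ[k] Env P :=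
  (RingQuot.mkAlgHom k (EnvRel P)).toLinearMap ∘ₗ
    ((TensorAlgebra.ι k : (M × M) →ₗ[k] TensorAlgebra k (M × M)) ∘ₗ LinearMap.inl k M M)

/-- The generators `h_a` of `A^e`. -/
def hgen (P : DGPAOn k M) : M →ₗ[k] Env P :=
  (RingQuot.mkAlgHom k (EnvRel P)).toLinearMap ∘ₗ
    ((TensorAlgebra.ι k : (M × M) →ₗ[k] TensorAlgebra k (M × M)) ∘ₗ LinearMap.inr k M M)

/-- `E` is the differential graded algebra structure on `A^e`, with the ring
multiplication of `A^e`, grading `|m_a| = |h_a| = |a|` and differential determined by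
`∂(m_a) = m_{d a}`, `∂(h_a) = h_{d a}` and the graded Leibniz rule. -/
def IsEnvDGA (P : DGPAOn k M) (E : DGAOn k (Env P)) : Prop :=
  (∀ x y : Env P, E.mul x y = x * y) ∧
  E.one = 1 ∧
  (∀ {i : ℤ} {a : M}, a ∈ P.gr i → mgen P a ∈ E.gr i) ∧
  (∀ {i : ℤ} {a : M}, a ∈ P.gr i → hgen P a ∈ E.gr i) ∧
  (∀ a : M, E.d (mgen P a) = mgen P (P.d a)) ∧
  (∀ a : M, E.d (hgen P a) = hgen P (P.d a))

end Env

section Lie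

variable {V : Type u} [AddCommGroup V] [Module k V]

/-- The defining relations of the universal enveloping algebra of a differential graded
Lie algebra. -/
inductive LieRel (L : DGLAOn k V) : TensorAlgebra k V → TensorAlgebra k V → Prop
  | rel {i j : ℤ} {a b : V} (ha : a ∈ L.gr i) (hb : b ∈ L.gr j) :
      LieRel L
        (TensorAlgebra.ι k a * TensorAlgebra.ι k b -
          ((-1 : k) ^ (i * j)) • (TensorAlgebra.ι k b * TensorAlgebra.ι k a))
        (TensorAlgebra.ι k (L.br a b))

/-- The universal enveloping algebra `U(L)` of a differential graded Lie algebra `L`. -/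
abbrev ULie (L : DGLAOn k V) : Type u := RingQuot (LieRel L)

/-- The canonical map `L → U(L)`. -/
def uGen (L : DGLAOn k V) : V →ₗ[k] ULie L :=
  (RingQuot.mkAlgHom k (LieRel L)).toLinearMap ∘ₗ TensorAlgebra.ι k

/-- `E` is the differential graded algebra structure of `U(L)`. -/
def IsULieDGA (L : DGLAOn k V) (E : DGAOn k (ULie L)) : Prop :=
  (∀ x y : ULie L, E.mul x y = x * y) ∧
  E.one = 1 ∧
  (∀ {i : ℤ} {a : V}, a ∈ L.gr i → uGen L a ∈ E.gr i) ∧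
  (∀ a : V, E.d (uGen L a) = uGen L (L.d a))

/-- The graded-symmetry relations defining the graded symmetric algebra of `L`. -/
inductive SymRel (L : DGLAOn k V) : TensorAlgebra k V → TensorAlgebra k V → Prop
  | rel {i j : ℤ} {a b : V} (ha : a ∈ L.gr i) (hb : b ∈ L.gr j) :
      SymRel L (TensorAlgebra.ι k a * TensorAlgebra.ι k b)
        (((-1 : k) ^ (i * j)) • (TensorAlgebra.ι k b * TensorAlgebra.ι k a))

/-- The graded symmetric algebra `𝕊L` of a differential graded Lie algebra `L`. -/
abbrev SymAlg (L : DGLAOn k V) : Type u := RingQuot (SymRel L)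

/-- The canonical map `L → 𝕊L`. -/
def sGen (L : DGLAOn k V) : V →ₗ[k] SymAlg L :=
  (RingQuot.mkAlgHom k (SymRel L)).toLinearMap ∘ₗ TensorAlgebra.ι k

/-- `R` is the differential graded Poisson algebra structure on `𝕊L` with differential
extending `d` and bracket extending the Lie bracket of `L` as a graded biderivation. -/
def IsSymDGPA (L : DGLAOn k V) (R : DGPAOn k (SymAlg L)) : Prop :=
  (∀ x y : SymAlg L, R.mul x y = x * y) ∧
  R.one = 1 ∧
  (∀ {i : ℤ} {a : V}, a ∈ L.gr i → sGen L a ∈ R.gr i) ∧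
  (∀ a : V, R.d (sGen L a) = sGen L (L.d a)) ∧
  (∀ a b : V, R.br (sGen L a) (sGen L b) = sGen L (L.br a b))

/-- `S` is the graded semidirect product differential graded Lie algebra `L ⋊ L`. -/
def IsSemidirect (L : DGLAOn k V) (S : DGLAOn k (V × V)) : Prop :=
  (∀ n : ℤ, S.gr n = (L.gr n).prod (L.gr n)) ∧
  (∀ z : V × V, S.d z = (L.d z.1, L.d z.2)) ∧
  (∀ {i j : ℤ} {x₁ x₂ y₁ y₂ : V}, x₁ ∈ L.gr i → x₂ ∈ L.gr i → y₁ ∈ L.gr j → y₂ ∈ L.gr j →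
    S.br (x₁, x₂) (y₁, y₂) =
      (L.br x₂ y₁ - ((-1 : k) ^ (i * j)) • L.br y₂ x₁, L.br x₂ y₂))

end Lie

section Smash

variable {M : Type u} [AddCommGroup M] [Module k M]

/-- The generators `1#(ab) - a#b - (-1)^{|a||b|} b#a` of the ideal defining `A^E`
inside the smash product `A # U(A)`. -/
def smashGens (P : DGPAOn k M) : Set (M ⊗[k] ULie P.toLie) :=
  {z | ∃ (i j : ℤ) (a b : M), a ∈ P.gr i ∧ b ∈ P.gr j ∧
    z = P.one ⊗ₜ[k] uGen P.toLie (P.mul a b) - a ⊗ₜ[k] uGen P.toLie b -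
        ((-1 : k) ^ (i * j)) • (b ⊗ₜ[k] uGen P.toLie a)}

/-- The two-sided ideal generated by a set `T` in a differential graded algebra `S`. -/
def idealGen {N : Type u} [AddCommGroup N] [Module k N] (S : DGAOn k N) (T : Set N) :
    Submodule k N :=
  sInf {I : Submodule k N | T ⊆ I ∧ ∀ x ∈ I, ∀ y : N, S.mul x y ∈ I ∧ S.mul y x ∈ I}

/-- `S` is the smash product differential graded algebra `A # U(A)`. -/
def IsSmash (P : DGPAOn k M) (EU : DGAOn k (ULie P.toLie))
    (S : DGAOn k (M ⊗[k] ULie P.toLie)) : Prop :=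
  S.one = P.one ⊗ₜ[k] (1 : ULie P.toLie) ∧
  (∀ a b : M, S.mul (a ⊗ₜ[k] (1 : ULie P.toLie)) (b ⊗ₜ[k] (1 : ULie P.toLie)) =
      P.mul a b ⊗ₜ[k] (1 : ULie P.toLie)) ∧
  (∀ u v : ULie P.toLie, S.mul (P.one ⊗ₜ[k] u) (P.one ⊗ₜ[k] v) = P.one ⊗ₜ[k] (u * v)) ∧
  (∀ (a : M) (u : ULie P.toLie), S.mul (a ⊗ₜ[k] (1 : ULie P.toLie)) (P.one ⊗ₜ[k] u) =
      a ⊗ₜ[k] u) ∧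
  (∀ {i j : ℤ} {c b : M}, c ∈ P.gr i → b ∈ P.gr j →
    S.mul (P.one ⊗ₜ[k] uGen P.toLie c) (b ⊗ₜ[k] (1 : ULie P.toLie)) =
      P.br c b ⊗ₜ[k] (1 : ULie P.toLie) + ((-1 : k) ^ (i * j)) • (b ⊗ₜ[k] uGen P.toLie c)) ∧
  (∀ {i j : ℤ} {a : M} {u : ULie P.toLie}, a ∈ P.gr i → u ∈ EU.gr j →
      a ⊗ₜ[k] u ∈ S.gr (i + j)) ∧
  (∀ {i : ℤ} {a : M}, a ∈ P.gr i → ∀ u : ULie P.toLie,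
    S.d (a ⊗ₜ[k] u) = P.d a ⊗ₜ[k] u + ((-1 : k) ^ i) • (a ⊗ₜ[k] EU.d u))

/-- `R` is the quotient differential graded algebra structure of `S` by the ideal `I`. -/
def IsQuotDGA {N : Type u} [AddCommGroup N] [Module k N] (S : DGAOn k N)
    (I : Submodule k N) (R : DGAOn k (N ⧸ I)) : Prop :=
  (∀ n : ℤ, R.gr n = Submodule.map I.mkQ (S.gr n)) ∧
  R.one = I.mkQ S.one ∧
  (∀ x y : N, R.mul (I.mkQ x) (I.mkQ y) = I.mkQ (S.mul x y)) ∧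
  (∀ x : N, R.d (I.mkQ x) = I.mkQ (S.d x))

end Smash

section Op

variable {M N : Type u} [AddCommGroup M] [Module k M] [AddCommGroup N] [Module k N]

/-- `P'` is the opposite differential graded Poisson algebra of `P` (the product is
unchanged by graded commutativity, the bracket is negated). -/
def IsOpDGPA (P P' : DGPAOn k M) : Prop :=
  P'.gr = P.gr ∧ (∀ x y : M, P'.mul x y = P.mul x y) ∧ P'.one = P.one ∧ P'.d = P.d ∧
  (∀ x y : M, P'.br x y = - P.br x y)

/-- `E'` is the opposite differential graded algebra of `E` (with the Koszul sign). -/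
def IsOpDGA (E E' : DGAOn k N) : Prop :=
  E'.gr = E.gr ∧ E'.one = E.one ∧ E'.d = E.d ∧
  (∀ {i j : ℤ} {x y : N}, x ∈ E.gr i → y ∈ E.gr j →
    E'.mul x y = ((-1 : k) ^ (i * j)) • E.mul y x)

end Op

section UEnv

variable {M N : Type u} [AddCommGroup M] [Module k M] [AddCommGroup N] [Module k N]

/-- A pair `(f, g)` where `f : A → D` is a differential graded algebra map and
`g : A → D_L` is a differential graded Lie algebra map (into the graded commutator Lie
structure of `D`), satisfying the two compatibility conditions of the universal property
of the universal enveloping algebra of a differential graded Poisson algebra. -/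
def UEPair (P : DGPAOn k M) (D : DGAOn k N) (f g : M →ₗ[k] N) : Prop :=
  (∀ {n : ℤ} {x : M}, x ∈ P.gr n → f x ∈ D.gr n) ∧
  (∀ {n : ℤ} {x : M}, x ∈ P.gr n → g x ∈ D.gr n) ∧
  (∀ a b : M, f (P.mul a b) = D.mul (f a) (f b)) ∧
  f P.one = D.one ∧
  (∀ a : M, f (P.d a) = D.d (f a)) ∧
  (∀ a : M, g (P.d a) = D.d (g a)) ∧
  (∀ {i j : ℤ} {a b : M}, a ∈ P.gr i → b ∈ P.gr j →
    g (P.br a b) = D.mul (g a) (g b) - ((-1 : k) ^ (i * j)) • D.mul (g b) (g a)) ∧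
  (∀ {i j : ℤ} {a b : M}, a ∈ P.gr i → b ∈ P.gr j →
    f (P.br a b) = D.mul (g a) (f b) - ((-1 : k) ^ (i * j)) • D.mul (f b) (g a)) ∧
  (∀ {i j : ℤ} {a b : M}, a ∈ P.gr i → b ∈ P.gr j →
    g (P.mul a b) = D.mul (f a) (g b) + ((-1 : k) ^ (i * j)) • D.mul (f b) (g a))

/-- `(E, α, β)` is a universal enveloping algebra of the differential graded Poisson
algebra `P`. -/
def IsUEnv (P : DGPAOn k M) (E : DGAOn k N) (α β : M →ₗ[k] N) : Prop :=
  UEPair P E α β ∧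
  ∀ (D' : Type u) [AddCommGroup D'] [Module k D'] (D : DGAOn k D') (f g : M →ₗ[k] D'),
    UEPair P D f g →
    ∃! φ : N →ₗ[k] D',
      IsDGAHom E D φ ∧ (∀ a : M, φ (α a) = f a) ∧ (∀ a : M, φ (β a) = g a)

end UEnv

section IdealsQuotients

variable {M : Type u} [AddCommGroup M] [Module k M]

/-- `B` is a differential graded Poisson ideal of `P`. -/
def IsDGPIdeal (P : DGPAOn k M) (B : Submodule k M) : Prop :=
  (B = ⨆ n : ℤ, B ⊓ P.gr n) ∧
  (∀ x ∈ B, P.d x ∈ B) ∧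
  (∀ x ∈ B, ∀ a : M, P.mul x a ∈ B) ∧
  (∀ x ∈ B, ∀ a : M, P.mul a x ∈ B) ∧
  (∀ x ∈ B, ∀ a : M, P.br a x ∈ B)

/-- `B` is a differential graded Poisson subalgebra of `P`. -/
def IsDGPSubalg (P : DGPAOn k M) (B : Submodule k M) : Prop :=
  (B = ⨆ n : ℤ, B ⊓ P.gr n) ∧ P.one ∈ B ∧
  (∀ x ∈ B, ∀ y ∈ B, P.mul x y ∈ B) ∧
  (∀ x ∈ B, P.d x ∈ B) ∧
  (∀ x ∈ B, ∀ y ∈ B, P.br x y ∈ B)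

/-- `R` is the quotient differential graded Poisson algebra structure on `M ⧸ B`. -/
def IsQuotDGPA (P : DGPAOn k M) (B : Submodule k M) (R : DGPAOn k (M ⧸ B)) : Prop :=
  (∀ n : ℤ, R.gr n = Submodule.map B.mkQ (P.gr n)) ∧
  R.one = B.mkQ P.one ∧
  (∀ x y : M, R.mul (B.mkQ x) (B.mkQ y) = B.mkQ (P.mul x y)) ∧
  (∀ x : M, R.d (B.mkQ x) = B.mkQ (P.d x)) ∧
  (∀ x y : M, R.br (B.mkQ x) (B.mkQ y) = B.mkQ (P.br x y))

/-- `S` is the differential graded Poisson algebra structure induced on a differential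
graded Poisson subalgebra `B` of `P`. -/
def IsSubDGPA (P : DGPAOn k M) (B : Submodule k M) (S : DGPAOn k B) : Prop :=
  (∀ n : ℤ, S.gr n = Submodule.comap B.subtype (P.gr n)) ∧
  ((S.one : M) = P.one) ∧
  (∀ x y : B, (S.mul x y : M) = P.mul (x : M) (y : M)) ∧
  (∀ x : B, (S.d x : M) = P.d (x : M)) ∧
  (∀ x y : B, (S.br x y : M) = P.br (x : M) (y : M))

/-- The cocycles `ker d` of a differential graded Poisson algebra. -/
def Cocycles (P : DGPAOn k M) : Submodule k M := LinearMap.ker P.d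

/-- The coboundaries `im d`, viewed inside the cocycles. -/
def CobIn (P : DGPAOn k M) : Submodule k (Cocycles P) :=
  Submodule.comap (Cocycles P).subtype (LinearMap.range P.d)

/-- The cohomology `H(A) = ker d / im d` of a differential graded Poisson algebra. -/
abbrev Cohom (P : DGPAOn k M) : Type u := Cocycles P ⧸ CobIn P

/-- The class map `ker d → H(A)`. -/
def cohCls (P : DGPAOn k M) : Cocycles P →ₗ[k] Cohom P := (CobIn P).mkQ

/-- `R` is the graded Poisson algebra structure on the cohomology of `P` (a differential
graded Poisson algebra structure with zero differential, with the induced grading,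
product and bracket). -/
def IsCohomDGPA (P : DGPAOn k M) (R : DGPAOn k (Cohom P)) : Prop :=
  R.d = 0 ∧
  (∀ n : ℤ, R.gr n =
    Submodule.map (cohCls P) (Submodule.comap (Cocycles P).subtype (P.gr n))) ∧
  (∀ h : P.one ∈ Cocycles P, R.one = cohCls P ⟨P.one, h⟩) ∧
  (∀ (a b : Cocycles P) (h : P.mul (a : M) (b : M) ∈ Cocycles P),
    R.mul (cohCls P a) (cohCls P b) = cohCls P ⟨P.mul (a : M) (b : M), h⟩) ∧
  (∀ (a b : Cocycles P) (h : P.br (a : M) (b : M) ∈ Cocycles P),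
    R.br (cohCls P a) (cohCls P b) = cohCls P ⟨P.br (a : M) (b : M), h⟩)

end IdealsQuotients

end Defs

section ModuleDefs

variable {k : Type u} [Field k]

/-- A left differential graded module structure on `X` over the differential graded
algebra `E`. -/
structure DGModOn {N : Type u} [AddCommGroup N] [Module k N] (E : DGAOn k N)
    (X : Type u) [AddCommGroup X] [Module k X] where
  grm : ℤ → Submodule k X
  decomp : DirectSum.Decomposition grm
  act : N →ₗ[k] X →ₗ[k] X
  act_one : ∀ x : X, act E.one x = x
  act_mul : ∀ (r s : N) (x : X), act (E.mul r s) x = act r (act s x)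
  act_mem : ∀ {i j : ℤ} {r : N} {x : X}, r ∈ E.gr i → x ∈ grm j → act r x ∈ grm (i + j)
  dm : X →ₗ[k] X
  dm_mem : ∀ {i : ℤ} {x : X}, x ∈ grm i → dm x ∈ grm (i + 1)
  dm_sq : ∀ x : X, dm (dm x) = 0
  dm_act : ∀ {i : ℤ} {r : N}, r ∈ E.gr i → ∀ x : X,
    dm (act r x) = act (E.d r) x + ((-1 : k) ^ i) • act r (dm x)

/-- A left differential graded Poisson module structure on `X` over the differential
graded Poisson algebra `P`. -/
structure DGPModOn {M : Type u} [AddCommGroup M] [Module k M] (P : DGPAOn k M)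
    (X : Type u) [AddCommGroup X] [Module k X] where
  grm : ℤ → Submodule k X
  decomp : DirectSum.Decomposition grm
  act : M →ₗ[k] X →ₗ[k] X
  act_one : ∀ x : X, act P.one x = x
  act_mul : ∀ (a b : M) (x : X), act (P.mul a b) x = act a (act b x)
  act_mem : ∀ {i j : ℤ} {a : M} {x : X}, a ∈ P.gr i → x ∈ grm j → act a x ∈ grm (i + j)
  dm : X →ₗ[k] X
  dm_mem : ∀ {i : ℤ} {x : X}, x ∈ grm i → dm x ∈ grm (i + 1)
  dm_sq : ∀ x : X, dm (dm x) = 0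
  dm_act : ∀ {i : ℤ} {a : M}, a ∈ P.gr i → ∀ x : X,
    dm (act a x) = act (P.d a) x + ((-1 : k) ^ i) • act a (dm x)
  bact : M →ₗ[k] X →ₗ[k] X
  bact_mem : ∀ {i j : ℤ} {a : M} {x : X}, a ∈ P.gr i → x ∈ grm j → bact a x ∈ grm (i + j)
  bact_amod : ∀ {i j : ℤ} {a b : M}, a ∈ P.gr i → b ∈ P.gr j → ∀ x : X,
    bact a (act b x) = act (P.br a b) x + ((-1 : k) ^ (i * j)) • act b (bact a x)
  bact_mulact : ∀ {i j : ℤ} {a b : M}, a ∈ P.gr i → b ∈ P.gr j → ∀ x : X,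
    bact (P.mul a b) x = act a (bact b x) + ((-1 : k) ^ (i * j)) • act b (bact a x)
  bact_jacobi : ∀ {i j : ℤ} {a b : M}, a ∈ P.gr i → b ∈ P.gr j → ∀ x : X,
    bact a (bact b x) = bact (P.br a b) x + ((-1 : k) ^ (i * j)) • bact b (bact a x)
  dm_bact : ∀ {i : ℤ} {a : M}, a ∈ P.gr i → ∀ x : X,
    dm (bact a x) = bact (P.d a) x + ((-1 : k) ^ i) • bact a (dm x)

/-- A morphism of left differential graded modules. -/
def IsDGModHom {N X Y : Type u} [AddCommGroup N] [Module k N]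
    [AddCommGroup X] [Module k X] [AddCommGroup Y] [Module k Y]
    {E : DGAOn k N} (W : DGModOn E X) (W' : DGModOn E Y) (f : X →ₗ[k] Y) : Prop :=
  (∀ {n : ℤ} {x : X}, x ∈ W.grm n → f x ∈ W'.grm n) ∧
  (∀ x : X, f (W.dm x) = W'.dm (f x)) ∧
  (∀ (r : N) (x : X), f (W.act r x) = W'.act r (f x))

/-- A morphism of left differential graded Poisson modules. -/
def IsDGPModHom {M X Y : Type u} [AddCommGroup M] [Module k M]
    [AddCommGroup X] [Module k X] [AddCommGroup Y] [Module k Y]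
    {P : DGPAOn k M} (V : DGPModOn P X) (V' : DGPModOn P Y) (f : X →ₗ[k] Y) : Prop :=
  (∀ {n : ℤ} {x : X}, x ∈ V.grm n → f x ∈ V'.grm n) ∧
  (∀ x : X, f (V.dm x) = V'.dm (f x)) ∧
  (∀ (a : M) (x : X), f (V.act a x) = V'.act a (f x)) ∧
  (∀ (a : M) (x : X), f (V.bact a x) = V'.bact a (f x))

/-- The correspondence between a differential graded Poisson module structure over `P`
and a differential graded module structure over `A^e` on the same space. -/
def ModCorr {M X : Type u} [AddCommGroup M] [Module k M] [AddCommGroup X] [Module k X]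
    {P : DGPAOn k M} {E : DGAOn k (Env P)}
    (V : DGPModOn P X) (W : DGModOn E X) : Prop :=
  W.grm = V.grm ∧ W.dm = V.dm ∧
  (∀ (a : M) (x : X), W.act (mgen P a) x = V.act a x) ∧
  (∀ (a : M) (x : X), W.act (hgen P a) x = V.bact a x)

end ModuleDefs

/-!
A pair of linear maps out of `A` satisfying the relations imposed on `a ↦ m_a` and `a ↦ h_a`
extends uniquely to an algebra map out of `A^e`. The pair `a ↦ [a#1]`, `a ↦ [1#a]` has the same
property for `A^E`: a pair `(f, g)` extends to `A # U(A)` by `a#u ↦ f(a) g̃(u)`, where `g̃` is the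
extension of the Lie map `g` to `U(A)`; since `A # U(A)` is generated by the elements `a#1` and
`1#c`, multiplicativity need only be tested against left multiplication by those, where it is the
relation `g(c) f(b) = f({c,b}) ± f(b) g(c)`. The remaining relation, on `g(ab)`, says that the
extension kills the ideal defining `A^E`. Both pairs consist of homogeneous maps commuting with the
differentials, so both algebras are universal among differential graded algebras too, and the two
universal objects are isomorphic.
-/

section AlgebraOfDGA

variable {k : Type u} [Field k] {N N' : Type u} [AddCommGroup N] [Module k N]
  [AddCommGroup N'] [Module k N']

/-- The `k`-algebra underlying a differential graded algebra structure `D` on `N`. It is a type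
synonym of `N`, because `N` may already carry a product. -/
def DGAOn.Alg (_D : DGAOn k N) : Type u := N

namespace DGAOn

instance (D : DGAOn k N) : AddCommGroup D.Alg := inferInstanceAs (AddCommGroup N)

instance (D : DGAOn k N) : Module k D.Alg := inferInstanceAs (Module k N)

/-- The identity of `N`, as a linear equivalence onto the algebra `D.Alg`. -/
def toAlg (D : DGAOn k N) : N ≃ₗ[k] D.Alg := LinearEquiv.refl k N

instance (D : DGAOn k N) : Ring D.Alg where
  __ := (inferInstance : AddCommGroup D.Alg)
  mul x y := D.toAlg (D.mul (D.toAlg.symm x) (D.toAlg.symm y))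
  one := D.toAlg D.one
  mul_assoc := D.mul_assoc
  one_mul := D.one_mul
  mul_one := D.mul_one
  left_distrib x := (D.mul x).map_add
  right_distrib := D.mul.map_add₂
  zero_mul := D.mul.map_zero₂
  mul_zero x := (D.mul x).map_zero

instance (D : DGAOn k N) : Algebra k D.Alg :=
  Algebra.ofModule (fun r x y => D.mul.map_smul₂ r x y) fun r x y => (D.mul x).map_smul r y

theorem toAlg_mul (D : DGAOn k N) (x y : N) : D.toAlg (D.mul x y) = D.toAlg x * D.toAlg y := rfl

theorem toAlg_one (D : DGAOn k N) : D.toAlg D.one = 1 := rfl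

theorem d_one (D : DGAOn k N) : D.d D.one = 0 := by
  have leibniz := D.d_mul D.one_mem D.one_mem
  simpa only [D.one_mul, D.mul_one, zpow_zero, one_smul, left_eq_add] using leibniz

/-- The algebra `B` itself, when the product of `D` is that of `B`. -/
def algEquivOfMul {B : Type u} [Ring B] [Algebra k B] (D : DGAOn k B)
    (hmul : ∀ x y : B, D.mul x y = x * y) : B ≃ₐ[k] D.Alg :=
  AlgEquiv.ofLinearEquiv D.toAlg
    (by rw [← D.toAlg_one, ← _root_.mul_one D.one, ← hmul, D.one_mul])
    fun x y => by rw [← hmul, D.toAlg_mul]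

end DGAOn

variable {E : DGAOn k N} {D : DGAOn k N'}

/-- The linear map between the underlying spaces of two differential graded algebras given by a
homomorphism of their underlying algebras. -/
def linearOfAlgHom (Φ : E.Alg →ₐ[k] D.Alg) : N →ₗ[k] N' :=
  D.toAlg.symm.toLinearMap ∘ₗ Φ.toLinearMap ∘ₗ E.toAlg.toLinearMap

theorem linearOfAlgHom_mul (Φ : E.Alg →ₐ[k] D.Alg) (x y : N) :
    linearOfAlgHom Φ (E.mul x y) = D.mul (linearOfAlgHom Φ x) (linearOfAlgHom Φ y) :=
  map_mul Φ (E.toAlg x) (E.toAlg y)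

theorem linearOfAlgHom_one (Φ : E.Alg →ₐ[k] D.Alg) : linearOfAlgHom Φ E.one = D.one :=
  map_one Φ

namespace IsDGAHom

theorem id (E : DGAOn k N) : IsDGAHom E E LinearMap.id :=
  ⟨fun h => h, fun _ _ => rfl, rfl, fun _ => rfl⟩

theorem comp {N'' : Type u} [AddCommGroup N''] [Module k N''] {F : DGAOn k N''}
    {ψ : N' →ₗ[k] N''} {φ : N →ₗ[k] N'} (hψ : IsDGAHom D F ψ) (hφ : IsDGAHom E D φ) :
    IsDGAHom E F (ψ ∘ₗ φ) := by
  obtain ⟨ψ_gr, ψ_mul, ψ_one, ψ_d⟩ := hψ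
  obtain ⟨φ_gr, φ_mul, φ_one, φ_d⟩ := hφ
  exact ⟨fun hx => ψ_gr (φ_gr hx), by simp [φ_mul, ψ_mul], by simp [φ_one, ψ_one],
    by simp [φ_d, ψ_d]⟩

/-- A morphism of differential graded algebras as a homomorphism of the underlying algebras. -/
def toAlgHom {φ : N →ₗ[k] N'} (hφ : IsDGAHom E D φ) : E.Alg →ₐ[k] D.Alg :=
  AlgHom.ofLinearMap (D.toAlg.toLinearMap ∘ₗ φ ∘ₗ E.toAlg.symm.toLinearMap) hφ.2.2.1 hφ.2.1

end IsDGAHom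

end AlgebraOfDGA

section DGAHomOfGenerators

variable {k : Type u} [Field k] {N N' : Type u} [AddCommGroup N] [Module k N]
  [AddCommGroup N'] [Module k N'] {E : DGAOn k N} {D : DGAOn k N'}

/-- The elements of degree `n` whose degree is preserved by `Φ` and on which `Φ` commutes with the
differentials. Unlike the last condition alone, these pieces are closed under products. -/
def dgCompatible (Φ : E.Alg →ₐ[k] D.Alg) (n : ℤ) : Submodule k E.Alg :=
  (E.gr n ⊓ (D.gr n).comap (linearOfAlgHom Φ) ⊓
    LinearMap.eqLocus (linearOfAlgHom Φ ∘ₗ E.d) (D.d ∘ₗ linearOfAlgHom Φ)).comap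
      E.toAlg.symm.toLinearMap

theorem toAlg_mem_dgCompatible {Φ : E.Alg →ₐ[k] D.Alg} {n : ℤ} {x : N} :
    E.toAlg x ∈ dgCompatible Φ n ↔ x ∈ E.gr n ∧ linearOfAlgHom Φ x ∈ D.gr n ∧
      linearOfAlgHom Φ (E.d x) = D.d (linearOfAlgHom Φ x) := by
  simp [dgCompatible, and_assoc]

instance (Φ : E.Alg →ₐ[k] D.Alg) : SetLike.GradedMonoid (dgCompatible Φ) where
  one_mem := by
    rw [← E.toAlg_one, toAlg_mem_dgCompatible, linearOfAlgHom_one, E.d_one, D.d_one, map_zero]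
    exact ⟨E.one_mem, D.one_mem, rfl⟩
  mul_mem := by
    intro i j x y hx hy
    obtain ⟨x, rfl⟩ := E.toAlg.surjective x
    obtain ⟨y, rfl⟩ := E.toAlg.surjective y
    rw [← E.toAlg_mul]
    rw [toAlg_mem_dgCompatible] at hx hy ⊢
    obtain ⟨hxE, hxD, hxd⟩ := hx
    obtain ⟨hyE, hyD, hyd⟩ := hy
    rw [linearOfAlgHom_mul]
    refine ⟨E.mul_mem hxE hyE, D.mul_mem hxD hyD, ?_⟩
    rw [E.d_mul hxE hyE, D.d_mul hxD hyD, map_add, map_smul, linearOfAlgHom_mul,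
      linearOfAlgHom_mul, hxd, hyd]

theorem iSup_dgCompatible_eq_top {Φ : E.Alg →ₐ[k] D.Alg} {s : Set E.Alg}
    (hs : Algebra.adjoin k s = ⊤) (hΦ : s ⊆ (⨆ n, dgCompatible Φ n : Submodule k E.Alg)) :
    ⨆ n, dgCompatible Φ n = ⊤ := by
  rw [Submodule.iSup_eq_toSubmodule_range] at hΦ ⊢
  rw [Algebra.toSubmodule_eq_top, eq_top_iff, ← hs]
  exact Algebra.adjoin_le hΦ

theorem isDGAHom_of_adjoin_eq_top {Φ : E.Alg →ₐ[k] D.Alg} {s : Set E.Alg}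
    (hs : Algebra.adjoin k s = ⊤) (hΦ : s ⊆ (⨆ n, dgCompatible Φ n : Submodule k E.Alg)) :
    IsDGAHom E D (linearOfAlgHom Φ) := by
  have top : ⨆ n, (dgCompatible Φ n).comap E.toAlg.toLinearMap = ⊤ :=
    iSup_dgCompatible_eq_top hs hΦ
  have le_gr : (fun n => (dgCompatible Φ n).comap E.toAlg.toLinearMap) ≤ E.gr :=
    fun n x hx => (toAlg_mem_dgCompatible.1 hx).1
  let := E.decomp
  have indep : iSupIndep E.gr :=
    (DirectSum.Decomposition.isInternal E.gr).submodule_iSupIndep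
  have eq_gr := (indep.le_iff_eq_of_iSup_eq_top top).1 le_gr
  have compatible {n : ℤ} {x : N} (hx : x ∈ E.gr n) : E.toAlg x ∈ dgCompatible Φ n := by
    rwa [← eq_gr] at hx
  refine ⟨fun hx => (toAlg_mem_dgCompatible.1 (compatible hx)).2.1, linearOfAlgHom_mul Φ,
    linearOfAlgHom_one Φ, fun x => ?_⟩
  have comm_d : linearOfAlgHom Φ ∘ₗ E.d = D.d ∘ₗ linearOfAlgHom Φ :=
    DirectSum.decompose_lhom_ext E.gr fun n => LinearMap.ext fun x =>
      (toAlg_mem_dgCompatible.1 (compatible x.2)).2.2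
  exact LinearMap.congr_fun comm_d x

end DGAHomOfGenerators

section PoissonPairs

variable {k : Type u} [Field k] {M N N' : Type u} [AddCommGroup M] [Module k M]
  [AddCommGroup N] [Module k N] [AddCommGroup N'] [Module k N']

theorem DGPAOn.induction_homogeneous (P : DGPAOn k M) {p : M → Prop} (zero : p 0)
    (homogeneous : ∀ {i : ℤ} {a : M}, a ∈ P.gr i → p a)
    (add : ∀ a b, p a → p b → p (a + b)) (a : M) : p a := by
  let := P.decomp
  exact DirectSum.Decomposition.inductionOn P.gr zero (fun a => homogeneous a.2) add a

/-- A degree-`0` linear map from a differential graded Poisson algebra to a differential graded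
algebra that commutes with the differentials. -/
structure IsCochainMap (P : DGPAOn k M) (D : DGAOn k N) (f : M →ₗ[k] N) : Prop where
  map_mem : ∀ {n : ℤ} {a : M}, a ∈ P.gr n → f a ∈ D.gr n
  map_d : ∀ a : M, f (P.d a) = D.d (f a)

theorem IsCochainMap.comp {P : DGPAOn k M} {E : DGAOn k N} {D : DGAOn k N'} {φ : N →ₗ[k] N'}
    {f : M →ₗ[k] N} (hφ : IsDGAHom E D φ) (hf : IsCochainMap P E f) :
    IsCochainMap P D (φ ∘ₗ f) := by
  obtain ⟨φ_gr, -, -, φ_d⟩ := hφ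
  exact ⟨fun ha => φ_gr (hf.map_mem ha), fun a => by simp [hf.map_d, φ_d]⟩

theorem IsCochainMap.range_subset_iSup_dgCompatible {P : DGPAOn k M} {E : DGAOn k N}
    {D : DGAOn k N'} {Φ : E.Alg →ₐ[k] D.Alg} {α : M →ₗ[k] N} {f : M →ₗ[k] N'}
    (hα : IsCochainMap P E α) (hf : IsCochainMap P D f)
    (hΦ : ∀ a, Φ (E.toAlg (α a)) = D.toAlg (f a)) :
    Set.range (E.toAlg.toLinearMap ∘ₗ α) ⊆ (⨆ n, dgCompatible Φ n : Submodule k E.Alg) := by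
  have hΦα (a : M) : linearOfAlgHom Φ (α a) = f a := hΦ a
  rintro _ ⟨a, rfl⟩
  induction a using P.induction_homogeneous with
  | zero => simp
  | @homogeneous i a ha =>
    have compatible : E.toAlg (α a) ∈ dgCompatible Φ i := by
      rw [toAlg_mem_dgCompatible, ← hα.map_d, hΦα, hΦα]
      exact ⟨hα.map_mem ha, hf.map_mem ha, hf.map_d a⟩
    exact Submodule.mem_iSup_of_mem i compatible
  | add a b ha hb => rw [map_add]; exact add_mem ha hb

/-- A pair of linear maps from `A` to an algebra, multiplicative respectively compatible with
brackets, such that the bracket of `A` becomes the graded commutator of the two maps. Such pairs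
are the algebra maps out of the smash product `A # U(A)`. -/
structure CovariantPair (P : DGPAOn k M) {B : Type*} [Ring B] [Algebra k B]
    (f g : M →ₗ[k] B) : Prop where
  map_one : f P.one = 1
  map_mul : ∀ a b : M, f (P.mul a b) = f a * f b
  map_br : ∀ {i j : ℤ} {a b : M}, a ∈ P.gr i → b ∈ P.gr j →
    f (P.br a b) = g a * f b - ((-1 : k) ^ (i * j)) • (f b * g a)
  lie_br : ∀ {i j : ℤ} {a b : M}, a ∈ P.gr i → b ∈ P.gr j →
    g (P.br a b) = g a * g b - ((-1 : k) ^ (i * j)) • (g b * g a)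

/-- A covariant pair whose second map is a derivation along the first one, that is, a pair
satisfying the relations imposed on `a ↦ m_a` and `a ↦ h_a` in `A^e`. -/
structure PoissonPair (P : DGPAOn k M) {B : Type*} [Ring B] [Algebra k B]
    (f g : M →ₗ[k] B) : Prop extends CovariantPair P f g where
  lie_mul : ∀ {i j : ℤ} {a b : M}, a ∈ P.gr i → b ∈ P.gr j →
    g (P.mul a b) = f a * g b + ((-1 : k) ^ (i * j)) • (f b * g a)

section Map

variable {P : DGPAOn k M} {B C : Type*} [Ring B] [Algebra k B] [Ring C] [Algebra k C]
  {f g : M →ₗ[k] B}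

theorem CovariantPair.map (h : CovariantPair P f g) (Φ : B →ₐ[k] C) :
    CovariantPair P (Φ.toLinearMap ∘ₗ f) (Φ.toLinearMap ∘ₗ g) where
  map_one := by simp [h.map_one]
  map_mul a b := by simp [h.map_mul]
  map_br ha hb := by simp [h.map_br ha hb]
  lie_br ha hb := by simp [h.lie_br ha hb]

theorem PoissonPair.map (h : PoissonPair P f g) (Φ : B →ₐ[k] C) :
    PoissonPair P (Φ.toLinearMap ∘ₗ f) (Φ.toLinearMap ∘ₗ g) where
  toCovariantPair := h.toCovariantPair.map Φ
  lie_mul ha hb := by simp [h.lie_mul ha hb]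

end Map

theorem uePair_iff {P : DGPAOn k M} {D : DGAOn k N} {f g : M →ₗ[k] N} :
    UEPair P D f g ↔ IsCochainMap P D f ∧ IsCochainMap P D g ∧
      PoissonPair P (D.toAlg.toLinearMap ∘ₗ f) (D.toAlg.toLinearMap ∘ₗ g) := by
  constructor
  · rintro ⟨f_mem, g_mem, f_mul, f_one, f_d, g_d, g_br, f_br, g_mul⟩
    exact ⟨⟨f_mem, f_d⟩, ⟨g_mem, g_d⟩, ⟨⟨f_one, f_mul, f_br, g_br⟩, g_mul⟩⟩
  · rintro ⟨⟨f_mem, f_d⟩, ⟨g_mem, g_d⟩, ⟨⟨f_one, f_mul, f_br, g_br⟩, g_mul⟩⟩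
    exact ⟨f_mem, g_mem, f_mul, f_one, f_d, g_d, g_br, f_br, g_mul⟩

end PoissonPairs

section UniversalProperty

variable {k : Type u} [Field k] {M N N' : Type u} [AddCommGroup M] [Module k M]
  [AddCommGroup N] [Module k N] [AddCommGroup N'] [Module k N'] {P : DGPAOn k M}

theorem adjoin_image_eq_top_of_surjective {R A B : Type*} [CommSemiring R] [Semiring A]
    [Algebra R A] [Semiring B] [Algebra R B] {s : Set A} (hs : Algebra.adjoin R s = ⊤)
    {Φ : A →ₐ[R] B} (hΦ : Function.Surjective Φ) : Algebra.adjoin R (Φ '' s) = ⊤ := by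
  rw [← AlgHom.map_adjoin, hs, Algebra.map_top, (AlgHom.range_eq_top Φ).2 hΦ]

/-- A generating Poisson pair through which every Poisson pair factors: the universal property of
`A^e` with gradings and differentials forgotten. -/
structure IsPoissonEnvelope (P : DGPAOn k M) {B : Type u} [Ring B] [Algebra k B]
    (α β : M →ₗ[k] B) : Prop extends PoissonPair P α β where
  adjoin_eq_top : Algebra.adjoin k (Set.range α ∪ Set.range β) = ⊤
  exists_algHom : ∀ {C : Type u} [Ring C] [Algebra k C] {f g : M →ₗ[k] C}, PoissonPair P f g →
    ∃ Φ : B →ₐ[k] C, (∀ a, Φ (α a) = f a) ∧ ∀ a, Φ (β a) = g a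

namespace IsPoissonEnvelope

theorem map_algEquiv {B C : Type u} [Ring B] [Algebra k B] [Ring C] [Algebra k C]
    {α β : M →ₗ[k] B} (h : IsPoissonEnvelope P α β) (e : B ≃ₐ[k] C) :
    IsPoissonEnvelope P (e.toLinearMap ∘ₗ α) (e.toLinearMap ∘ₗ β) where
  toPoissonPair := h.toPoissonPair.map (e : B →ₐ[k] C)
  adjoin_eq_top := by
    have top :=
      adjoin_image_eq_top_of_surjective h.adjoin_eq_top (Φ := (e : B →ₐ[k] C)) e.surjective
    rwa [Set.image_union, ← Set.range_comp, ← Set.range_comp] at top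
  exists_algHom hfg := by
    obtain ⟨Φ, hα, hβ⟩ := h.exists_algHom hfg
    exact ⟨Φ.comp e.symm, by simp [hα], by simp [hβ]⟩

theorem isUEnv {E : DGAOn k N} {α β : M →ₗ[k] N}
    (h : IsPoissonEnvelope P (E.toAlg.toLinearMap ∘ₗ α) (E.toAlg.toLinearMap ∘ₗ β))
    (hα : IsCochainMap P E α) (hβ : IsCochainMap P E β) : IsUEnv P E α β := by
  refine ⟨uePair_iff.2 ⟨hα, hβ, h.toPoissonPair⟩, fun N' _ _ D f g hfg => ?_⟩
  obtain ⟨hf, hg, pair⟩ := uePair_iff.1 hfg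
  obtain ⟨Φ, Φα, Φβ⟩ := h.exists_algHom pair
  refine ⟨linearOfAlgHom Φ, ⟨?_, Φα, Φβ⟩, ?_⟩
  · exact isDGAHom_of_adjoin_eq_top h.adjoin_eq_top <| Set.union_subset
      (hα.range_subset_iSup_dgCompatible hf Φα) (hβ.range_subset_iSup_dgCompatible hg Φβ)
  · rintro ψ ⟨hψ, ψα, ψβ⟩
    have eq : hψ.toAlgHom = Φ := by
      refine AlgHom.ext_of_adjoin_eq_top h.adjoin_eq_top ?_
      rintro _ (⟨a, rfl⟩ | ⟨a, rfl⟩)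
      · exact (congrArg D.toAlg (ψα a)).trans (Φα a).symm
      · exact (congrArg D.toAlg (ψβ a)).trans (Φβ a).symm
    exact LinearMap.ext fun x => AlgHom.congr_fun eq (E.toAlg x)

end IsPoissonEnvelope

theorem IsUEnv.exists_bijective {E : DGAOn k N} {F : DGAOn k N'} {α β : M →ₗ[k] N}
    {α' β' : M →ₗ[k] N'} (hE : IsUEnv P E α β) (hF : IsUEnv P F α' β') :
    ∃ φ : N →ₗ[k] N', IsDGAHom E F φ ∧ Function.Bijective φ ∧
      (∀ a, φ (α a) = α' a) ∧ ∀ a, φ (β a) = β' a := by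
  obtain ⟨pairE, liftE⟩ := hE
  obtain ⟨pairF, liftF⟩ := hF
  obtain ⟨φ, ⟨hφ, φα, φβ⟩, -⟩ := liftE N' F α' β' pairF
  obtain ⟨ψ, ⟨hψ, ψα, ψβ⟩, -⟩ := liftF N E α β pairE
  have left : ψ ∘ₗ φ = LinearMap.id :=
    (liftE N E α β pairE).unique ⟨hψ.comp hφ, by simp [φα, ψα], by simp [φβ, ψβ]⟩
      ⟨IsDGAHom.id E, fun _ => rfl, fun _ => rfl⟩
  have right : φ ∘ₗ ψ = LinearMap.id :=
    (liftF N' F α' β' pairF).unique ⟨hφ.comp hψ, by simp [φα, ψα], by simp [φβ, ψβ]⟩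
      ⟨IsDGAHom.id F, fun _ => rfl, fun _ => rfl⟩
  exact ⟨φ, hφ, ⟨Function.LeftInverse.injective (LinearMap.congr_fun left),
    Function.RightInverse.surjective (LinearMap.congr_fun right)⟩, φα, φβ⟩

end UniversalProperty

section EnvelopingAlgebra

variable {k : Type u} [Field k] {M : Type u} [AddCommGroup M] [Module k M] {P : DGPAOn k M}

theorem adjoin_range_mkAlgHom_ι {V : Type u} [AddCommGroup V] [Module k V]
    (r : TensorAlgebra k V → TensorAlgebra k V → Prop) :
    Algebra.adjoin k (Set.range fun v => RingQuot.mkAlgHom k r (TensorAlgebra.ι k v)) = ⊤ := by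
  have top := adjoin_image_eq_top_of_surjective (TensorAlgebra.adjoin_range_ι (R := k) (M := V))
    (RingQuot.mkAlgHom_surjective k r)
  rwa [← Set.range_comp] at top

theorem mgen_apply (P : DGPAOn k M) (a : M) :
    mgen P a = RingQuot.mkAlgHom k (EnvRel P) (TensorAlgebra.ι k (a, 0)) := rfl

theorem hgen_apply (P : DGPAOn k M) (a : M) :
    hgen P a = RingQuot.mkAlgHom k (EnvRel P) (TensorAlgebra.ι k (0, a)) := rfl

theorem poissonPair_gen (P : DGPAOn k M) : PoissonPair P (mgen P) (hgen P) where
  map_one := by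
    rw [mgen_apply, RingQuot.mkAlgHom_rel k EnvRel.relone, map_one]
  map_mul a b := by
    simp only [mgen_apply, RingQuot.mkAlgHom_rel k (EnvRel.relmul a b), map_mul]
  map_br ha hb := by
    simp only [mgen_apply, hgen_apply, RingQuot.mkAlgHom_rel k (EnvRel.relmbr ha hb), map_sub,
      map_smul, map_mul]
  lie_br ha hb := by
    simp only [hgen_apply, RingQuot.mkAlgHom_rel k (EnvRel.relhbr ha hb), map_sub, map_smul,
      map_mul]
  lie_mul ha hb := by
    simp only [mgen_apply, hgen_apply, RingQuot.mkAlgHom_rel k (EnvRel.relhmul ha hb), map_add,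
      map_smul, map_mul]

theorem adjoin_range_gen_eq_top (P : DGPAOn k M) :
    Algebra.adjoin k (Set.range (mgen P) ∪ Set.range (hgen P)) = ⊤ := by
  rw [eq_top_iff, ← adjoin_range_mkAlgHom_ι (EnvRel P), Algebra.adjoin_le_iff]
  rintro _ ⟨⟨a, b⟩, rfl⟩
  have split : RingQuot.mkAlgHom k (EnvRel P) (TensorAlgebra.ι k (a, b)) =
      mgen P a + hgen P b := by
    simp [mgen_apply, hgen_apply, ← map_add]
  simp only [SetLike.mem_coe, split]
  exact add_mem (Algebra.subset_adjoin (.inl ⟨a, rfl⟩)) (Algebra.subset_adjoin (.inr ⟨b, rfl⟩))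

theorem PoissonPair.exists_env_algHom {B : Type*} [Ring B] [Algebra k B] {f g : M →ₗ[k] B}
    (h : PoissonPair P f g) :
    ∃ Φ : Env P →ₐ[k] B, (∀ a, Φ (mgen P a) = f a) ∧ ∀ a, Φ (hgen P a) = g a := by
  have respects : ∀ ⦃x y⦄, EnvRel P x y →
      TensorAlgebra.lift k (f.coprod g) x = TensorAlgebra.lift k (f.coprod g) y := by
    intro x y hxy
    cases hxy with
    | relone => simp [h.map_one]
    | relmul a b => simp [h.map_mul]
    | relhmul ha hb => simp [h.lie_mul ha hb]
    | relmbr ha hb => simp [h.map_br ha hb]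
    | relhbr ha hb => simp [h.lie_br ha hb]
  refine ⟨RingQuot.liftAlgHom k ⟨_, respects⟩, fun a => ?_, fun a => ?_⟩
  · simp [mgen_apply]
  · simp [hgen_apply]

theorem isPoissonEnvelope_gen (P : DGPAOn k M) : IsPoissonEnvelope P (mgen P) (hgen P) where
  toPoissonPair := poissonPair_gen P
  adjoin_eq_top := adjoin_range_gen_eq_top P
  exists_algHom h := h.exists_env_algHom

theorem IsEnvDGA.isUEnv {E : DGAOn k (Env P)} (hE : IsEnvDGA P E) :
    IsUEnv P E (mgen P) (hgen P) := by
  obtain ⟨hmul, -, m_mem, h_mem, m_d, h_d⟩ := hE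
  exact ((isPoissonEnvelope_gen P).map_algEquiv (E.algEquivOfMul hmul)).isUEnv
    ⟨m_mem, fun a => (m_d a).symm⟩ ⟨h_mem, fun a => (h_d a).symm⟩

end EnvelopingAlgebra

section LieEnvelope

variable {k : Type u} [Field k] {V : Type u} [AddCommGroup V] [Module k V] (L : DGLAOn k V)

theorem uGen_apply (a : V) :
    uGen L a = RingQuot.mkAlgHom k (LieRel L) (TensorAlgebra.ι k a) := rfl

variable {L}

theorem uGen_br {i j : ℤ} {a b : V} (ha : a ∈ L.gr i) (hb : b ∈ L.gr j) :
    uGen L (L.br a b) = uGen L a * uGen L b - ((-1 : k) ^ (i * j)) • (uGen L b * uGen L a) := by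
  simp only [uGen_apply, ← RingQuot.mkAlgHom_rel k (LieRel.rel ha hb), map_sub, map_smul, map_mul]

theorem adjoin_range_uGen : Algebra.adjoin k (Set.range (uGen L)) = ⊤ :=
  adjoin_range_mkAlgHom_ι (LieRel L)

theorem exists_uLie_algHom {B : Type*} [Ring B] [Algebra k B] {g : V →ₗ[k] B}
    (hg : ∀ {i j : ℤ} {a b : V}, a ∈ L.gr i → b ∈ L.gr j →
      g (L.br a b) = g a * g b - ((-1 : k) ^ (i * j)) • (g b * g a)) :
    ∃ G : ULie L →ₐ[k] B, ∀ a, G (uGen L a) = g a := by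
  have respects : ∀ ⦃x y⦄, LieRel L x y →
      TensorAlgebra.lift k g x = TensorAlgebra.lift k g y := by
    rintro _ _ ⟨ha, hb⟩
    simp [hg ha hb]
  exact ⟨RingQuot.liftAlgHom k ⟨_, respects⟩, fun a => by simp [uGen_apply]⟩

end LieEnvelope

section SmashProduct

variable {k : Type u} [Field k] {M : Type u} [AddCommGroup M] [Module k M] {P : DGPAOn k M}
  {EU : DGAOn k (ULie P.toLie)} {S : DGAOn k (M ⊗[k] ULie P.toLie)}

theorem DGPAOn.d_one (P : DGPAOn k M) : P.d P.one = 0 := by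
  have leibniz := P.d_mul P.one_mem P.one_mem
  simpa only [P.one_mul, P.mul_one, zpow_zero, one_smul, left_eq_add] using leibniz

theorem DGPAOn.toLie_d (P : DGPAOn k M) : P.toLie.d = P.d := rfl

variable (P) in
/-- The inclusion `a ↦ a#1` of `A` into the space underlying the smash product `A # U(A)`. -/
def smashInl : M →ₗ[k] M ⊗[k] ULie P.toLie := (TensorProduct.mk k M (ULie P.toLie)).flip 1

variable (P) in
/-- The inclusion `u ↦ 1#u` of `U(A)` into the space underlying the smash product `A # U(A)`. -/
def smashInr : ULie P.toLie →ₗ[k] M ⊗[k] ULie P.toLie := TensorProduct.mk k M (ULie P.toLie) P.one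

theorem smashInl_apply (a : M) : smashInl P a = a ⊗ₜ 1 := rfl

theorem smashInr_apply (u : ULie P.toLie) : smashInr P u = P.one ⊗ₜ u := rfl

namespace IsSmash

theorem isCochainMap_smashInl (hS : IsSmash P EU S) (hEU : IsULieDGA P.toLie EU) :
    IsCochainMap P S (smashInl P) := by
  obtain ⟨-, -, -, -, -, tmul_mem, d_tmul⟩ := hS
  obtain ⟨-, EU_one, -, -⟩ := hEU
  have one_mem : (1 : ULie P.toLie) ∈ EU.gr 0 := EU_one ▸ EU.one_mem
  have d_one : EU.d 1 = 0 := EU_one ▸ EU.d_one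
  refine ⟨fun ha => by simpa [smashInl_apply] using tmul_mem ha one_mem, fun a => ?_⟩
  induction a using P.induction_homogeneous with
  | zero => simp
  | homogeneous ha => simp [smashInl_apply, d_tmul ha, d_one]
  | add a b ha hb => simp only [map_add, ha, hb]

theorem isCochainMap_smashInr_uGen (hS : IsSmash P EU S) (hEU : IsULieDGA P.toLie EU) :
    IsCochainMap P S (smashInr P ∘ₗ uGen P.toLie) := by
  obtain ⟨-, -, -, -, -, tmul_mem, d_tmul⟩ := hS
  obtain ⟨-, -, uGen_mem, d_uGen⟩ := hEU
  refine ⟨fun ha => by simpa [smashInr_apply] using tmul_mem P.one_mem (uGen_mem ha), fun a => ?_⟩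
  simp [smashInr_apply, d_tmul P.one_mem, P.d_one, d_uGen, P.toLie_d]

/-- The inclusion `u ↦ 1#u` of `U(A)` into the smash product, as an algebra homomorphism. -/
def inr (hS : IsSmash P EU S) : ULie P.toLie →ₐ[k] S.Alg :=
  AlgHom.ofLinearMap (S.toAlg.toLinearMap ∘ₗ smashInr P)
    (by obtain ⟨one, -⟩ := hS; exact congrArg S.toAlg one.symm)
    (by obtain ⟨-, -, mul, -⟩ := hS; exact fun u v => congrArg S.toAlg (mul u v).symm)

theorem inl_mul_inr (hS : IsSmash P EU S) (a : M) (u : ULie P.toLie) :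
    S.toAlg (smashInl P a) * hS.inr u = S.toAlg (a ⊗ₜ u) := by
  obtain ⟨-, -, -, mul, -⟩ := hS
  exact congrArg S.toAlg (mul a u)

theorem inr_uGen_mul_inl (hS : IsSmash P EU S) {i j : ℤ} {c b : M} (hc : c ∈ P.gr i)
    (hb : b ∈ P.gr j) :
    hS.inr (uGen P.toLie c) * S.toAlg (smashInl P b) = S.toAlg (smashInl P (P.br c b)) +
      ((-1 : k) ^ (i * j)) • (S.toAlg (smashInl P b) * hS.inr (uGen P.toLie c)) := by
  rw [hS.inl_mul_inr]
  obtain ⟨-, -, -, -, mul, -⟩ := hS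
  exact congrArg S.toAlg (mul hc hb)

theorem inl_mul (hS : IsSmash P EU S) (a b : M) :
    S.toAlg (smashInl P (P.mul a b)) = S.toAlg (smashInl P a) * S.toAlg (smashInl P b) := by
  obtain ⟨-, mul, -⟩ := hS
  exact congrArg S.toAlg (mul a b).symm

theorem inl_one (hS : IsSmash P EU S) : S.toAlg (smashInl P P.one) = 1 := by
  obtain ⟨one, -⟩ := hS
  exact congrArg S.toAlg one.symm

theorem covariantPair (hS : IsSmash P EU S) :
    CovariantPair P (S.toAlg.toLinearMap ∘ₗ smashInl P)
      (hS.inr.toLinearMap ∘ₗ uGen P.toLie) where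
  map_one := hS.inl_one
  map_mul := hS.inl_mul
  map_br ha hb := eq_sub_of_add_eq (hS.inr_uGen_mul_inl ha hb).symm
  lie_br ha hb := by
    have br := congrArg hS.inr (uGen_br (L := P.toLie) ha hb)
    rwa [map_sub, map_smul, map_mul, map_mul] at br

theorem adjoin_eq_top (hS : IsSmash P EU S) :
    Algebra.adjoin k (Set.range (S.toAlg.toLinearMap ∘ₗ smashInl P) ∪
      Set.range (hS.inr.toLinearMap ∘ₗ uGen P.toLie)) = ⊤ := by
  set T := Algebra.adjoin k (Set.range (S.toAlg.toLinearMap ∘ₗ smashInl P) ∪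
    Set.range (hS.inr.toLinearMap ∘ₗ uGen P.toLie))
  have inl_mem (a : M) : S.toAlg (smashInl P a) ∈ T := Algebra.subset_adjoin (.inl ⟨a, rfl⟩)
  have inr_mem (u : ULie P.toLie) : hS.inr u ∈ T := by
    have le : (⊤ : Subalgebra k (ULie P.toLie)) ≤ T.comap hS.inr := by
      rw [← adjoin_range_uGen, Algebra.adjoin_le_iff]
      rintro _ ⟨a, rfl⟩
      exact Algebra.subset_adjoin (.inr ⟨a, rfl⟩)
    exact le Algebra.mem_top
  rw [Algebra.eq_top_iff]
  intro z
  obtain ⟨z, rfl⟩ := S.toAlg.surjective z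
  induction z using TensorProduct.induction_on with
  | zero => simp
  | tmul a u => rw [← hS.inl_mul_inr]; exact mul_mem (inl_mem a) (inr_mem u)
  | add x y hx hy => rw [map_add]; exact add_mem hx hy

end IsSmash

theorem map_mul_of_adjoin_eq_top {R A B : Type*} [CommSemiring R] [Semiring A] [Algebra R A]
    [Semiring B] [Algebra R B] {s : Set A} (hs : Algebra.adjoin R s = ⊤) {φ : A →ₗ[R] B}
    (one : φ 1 = 1) (mul : ∀ x ∈ s, ∀ y, φ (x * y) = φ x * φ y) (x y : A) :
    φ (x * y) = φ x * φ y := by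
  have hx : x ∈ Algebra.adjoin R s := hs ▸ Algebra.mem_top
  induction hx using Algebra.adjoin_induction generalizing y with
  | mem x hx => exact mul x hx y
  | algebraMap r => simp [Algebra.algebraMap_eq_smul_one, one]
  | add x x' _ _ hx hx' => simp only [add_mul, map_add, hx, hx']
  | mul x x' _ _ hx hx' => rw [mul_assoc, hx, hx', hx, mul_assoc]

section Lift

variable {B : Type*} [Ring B] [Algebra k B] {f g : M →ₗ[k] B}

/-- The linear map `a#u ↦ f(a) G(u)` out of the smash product, which is multiplicative when `f` and
the restriction of `G` to `A` form a covariant pair. -/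
def smashMul (f : M →ₗ[k] B) (G : ULie P.toLie →ₐ[k] B) : S.Alg →ₗ[k] B :=
  TensorProduct.lift ((LinearMap.mul k B).compl₁₂ f G.toLinearMap) ∘ₗ S.toAlg.symm.toLinearMap

theorem smashMul_tmul (f : M →ₗ[k] B) (G : ULie P.toLie →ₐ[k] B) (a : M) (u : ULie P.toLie) :
    smashMul f G (S.toAlg (a ⊗ₜ u)) = f a * G u := by
  simp [smashMul]

theorem smashMul_inl_mul (hS : IsSmash P EU S) (hf : ∀ a b, f (P.mul a b) = f a * f b)
    (G : ULie P.toLie →ₐ[k] B) (a : M) (z : S.Alg) :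
    smashMul f G (S.toAlg (smashInl P a) * z) = f a * smashMul f G z := by
  obtain ⟨z, rfl⟩ := S.toAlg.surjective z
  induction z using TensorProduct.induction_on with
  | zero => simp
  | tmul b u =>
    rw [← hS.inl_mul_inr b u, ← mul_assoc, ← hS.inl_mul, hS.inl_mul_inr, hS.inl_mul_inr,
      smashMul_tmul, smashMul_tmul, hf, mul_assoc]
  | add x y hx hy => simp only [map_add, mul_add, hx, hy]

theorem smashMul_inr_uGen_mul_tmul (hS : IsSmash P EU S) (h : CovariantPair P f g)
    {G : ULie P.toLie →ₐ[k] B} (hG : ∀ a, G (uGen P.toLie a) = g a) {i j : ℤ} {c b : M}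
    (hc : c ∈ P.gr i) (hb : b ∈ P.gr j) (u : ULie P.toLie) :
    smashMul f G (hS.inr (uGen P.toLie c) * S.toAlg (b ⊗ₜ u)) = g c * (f b * G u) := by
  rw [← hS.inl_mul_inr b u, ← mul_assoc, hS.inr_uGen_mul_inl hc hb, add_mul, smul_mul_assoc,
    mul_assoc, ← map_mul, map_add, map_smul, hS.inl_mul_inr, hS.inl_mul_inr, smashMul_tmul,
    smashMul_tmul, map_mul, hG, h.map_br hc hb, sub_mul, smul_mul_assoc, mul_assoc, mul_assoc,
    sub_add_cancel]

theorem smashMul_inr_uGen_mul (hS : IsSmash P EU S) (h : CovariantPair P f g)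
    {G : ULie P.toLie →ₐ[k] B} (hG : ∀ a, G (uGen P.toLie a) = g a) (c : M) (z : S.Alg) :
    smashMul f G (hS.inr (uGen P.toLie c) * z) = g c * smashMul f G z := by
  obtain ⟨z, rfl⟩ := S.toAlg.surjective z
  induction c using P.induction_homogeneous with
  | zero => simp
  | add c c' hc hc' => simp only [map_add, add_mul, hc, hc']
  | homogeneous hc =>
    induction z using TensorProduct.induction_on with
    | zero => simp
    | add x y hx hy => simp only [map_add, mul_add, hx, hy]
    | tmul b u =>
      induction b using P.induction_homogeneous with
      | zero => simp
      | add b b' hb hb' => simp only [TensorProduct.add_tmul, map_add, mul_add, hb, hb']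
      | homogeneous hb => rw [smashMul_inr_uGen_mul_tmul hS h hG hc hb, smashMul_tmul]

theorem CovariantPair.exists_smash_algHom (h : CovariantPair P f g) (hS : IsSmash P EU S) :
    ∃ Φ : S.Alg →ₐ[k] B, (∀ a, Φ (S.toAlg (smashInl P a)) = f a) ∧
      ∀ a, Φ (hS.inr (uGen P.toLie a)) = g a := by
  obtain ⟨G, hG⟩ := exists_uLie_algHom (L := P.toLie) h.lie_br
  have map_inl (a : M) : smashMul f G (S.toAlg (smashInl P a)) = f a := by
    simp [smashInl_apply, smashMul_tmul]
  have map_inr (a : M) : smashMul f G (hS.inr (uGen P.toLie a)) = g a := by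
    rw [← one_mul (hS.inr _), ← hS.inl_one, hS.inl_mul_inr, smashMul_tmul, h.map_one, one_mul, hG]
  have one : smashMul f G (1 : S.Alg) = 1 := by
    rw [← hS.inl_one, map_inl, h.map_one]
  refine ⟨AlgHom.ofLinearMap (smashMul f G) one
    (map_mul_of_adjoin_eq_top hS.adjoin_eq_top one ?_), map_inl, map_inr⟩
  rintro _ (⟨a, rfl⟩ | ⟨a, rfl⟩) z
  · exact (smashMul_inl_mul hS h.map_mul G a z).trans (congrArg (· * _) (map_inl a).symm)
  · exact (smashMul_inr_uGen_mul hS h hG a z).trans (congrArg (· * _) (map_inr a).symm)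

end Lift

end SmashProduct

section QuotientOfSmashProduct

variable {k : Type u} [Field k]

section Quotient

variable {N : Type u} [AddCommGroup N] [Module k N] {S : DGAOn k N} {I : Submodule k N}
  {R : DGAOn k (N ⧸ I)} {B : Type*} [Ring B] [Algebra k B]

theorem subset_idealGen (S : DGAOn k N) (T : Set N) : T ⊆ idealGen S T := fun x hx => by
  simp only [idealGen, SetLike.mem_coe, Submodule.mem_sInf]
  exact fun J hJ => hJ.1 hx

theorem idealGen_le_ker {T : Set N} {Φ : S.Alg →ₐ[k] B} (hΦ : ∀ x ∈ T, Φ (S.toAlg x) = 0) :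
    idealGen S T ≤ LinearMap.ker (Φ.toLinearMap ∘ₗ S.toAlg.toLinearMap) := by
  refine sInf_le ⟨hΦ, fun x hx y => ?_⟩
  have hx : Φ (S.toAlg x) = 0 := hx
  simp [S.toAlg_mul, hx]

theorem IsQuotDGA.isDGAHom_mkQ (hR : IsQuotDGA S I R) : IsDGAHom S R I.mkQ := by
  obtain ⟨gr, one, mul, d⟩ := hR
  exact ⟨fun hx => gr _ ▸ Submodule.mem_map_of_mem hx, fun x y => (mul x y).symm, one.symm,
    fun x => (d x).symm⟩

theorem IsQuotDGA.exists_algHom (hR : IsQuotDGA S I R) {Φ : S.Alg →ₐ[k] B}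
    (hΦ : I ≤ LinearMap.ker (Φ.toLinearMap ∘ₗ S.toAlg.toLinearMap)) :
    ∃ Ψ : R.Alg →ₐ[k] B, ∀ x, Ψ (R.toAlg (I.mkQ x)) = Φ (S.toAlg x) := by
  obtain ⟨-, mkQ_mul, mkQ_one, -⟩ := hR.isDGAHom_mkQ
  let Ψ : R.Alg →ₗ[k] B :=
    I.liftQ (Φ.toLinearMap ∘ₗ S.toAlg.toLinearMap) hΦ ∘ₗ R.toAlg.symm.toLinearMap
  have Ψ_mkQ (x : N) : Ψ (R.toAlg (I.mkQ x)) = Φ (S.toAlg x) := by simp [Ψ]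
  refine ⟨AlgHom.ofLinearMap Ψ ?_ fun x y => ?_, Ψ_mkQ⟩
  · rw [← R.toAlg_one, ← mkQ_one, Ψ_mkQ, S.toAlg_one, map_one]
  · obtain ⟨x, rfl⟩ := R.toAlg.surjective x
    obtain ⟨y, rfl⟩ := R.toAlg.surjective y
    obtain ⟨x, rfl⟩ := I.mkQ_surjective x
    obtain ⟨y, rfl⟩ := I.mkQ_surjective y
    rw [← R.toAlg_mul, ← mkQ_mul, Ψ_mkQ, Ψ_mkQ, Ψ_mkQ, S.toAlg_mul, map_mul]

end Quotient

variable {M : Type u} [AddCommGroup M] [Module k M] {P : DGPAOn k M}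
  {EU : DGAOn k (ULie P.toLie)} {S : DGAOn k (M ⊗[k] ULie P.toLie)}
  {I : Submodule k (M ⊗[k] ULie P.toLie)} {R : DGAOn k ((M ⊗[k] ULie P.toLie) ⧸ I)}

theorem IsSmash.poissonPair_mkQ (hS : IsSmash P EU S) (hI : smashGens P ⊆ I)
    (hR : IsQuotDGA S I R) :
    PoissonPair P (R.toAlg.toLinearMap ∘ₗ I.mkQ ∘ₗ smashInl P)
      (R.toAlg.toLinearMap ∘ₗ I.mkQ ∘ₗ smashInr P ∘ₗ uGen P.toLie) where
  toCovariantPair := hS.covariantPair.map hR.isDGAHom_mkQ.toAlgHom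
  lie_mul {i j a b} ha hb := by
    have mkQ_tmul (a : M) (u : ULie P.toLie) : R.toAlg (I.mkQ (a ⊗ₜ u)) =
        R.toAlg (I.mkQ (smashInl P a)) * R.toAlg (I.mkQ (smashInr P u)) := by
      have := congrArg hR.isDGAHom_mkQ.toAlgHom (hS.inl_mul_inr a u)
      rw [map_mul] at this
      exact this.symm
    have relation := hI ⟨i, j, a, b, ha, hb, rfl⟩
    rw [SetLike.mem_coe, ← Submodule.Quotient.mk_eq_zero, ← Submodule.mkQ_apply, map_sub, map_sub,
      map_smul, sub_sub, sub_eq_zero] at relation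
    have relation := congrArg R.toAlg relation
    rw [map_add, map_smul, mkQ_tmul a, mkQ_tmul b] at relation
    exact relation

theorem isPoissonEnvelope_smashQuot (hS : IsSmash P EU S) (hI : I = idealGen S (smashGens P))
    (hR : IsQuotDGA S I R) :
    IsPoissonEnvelope P (R.toAlg.toLinearMap ∘ₗ I.mkQ ∘ₗ smashInl P)
      (R.toAlg.toLinearMap ∘ₗ I.mkQ ∘ₗ smashInr P ∘ₗ uGen P.toLie) where
  toPoissonPair := hS.poissonPair_mkQ (hI ▸ subset_idealGen S _) hR
  adjoin_eq_top := by
    have top := adjoin_image_eq_top_of_surjective hS.adjoin_eq_top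
      (Φ := hR.isDGAHom_mkQ.toAlgHom) I.mkQ_surjective
    rwa [Set.image_union, ← Set.range_comp, ← Set.range_comp] at top
  exists_algHom {C _ _ f g} h := by
    obtain ⟨Φ, Φ_inl, Φ_inr⟩ := h.toCovariantPair.exists_smash_algHom hS
    have Φ_tmul (a c : M) : Φ (S.toAlg (a ⊗ₜ uGen P.toLie c)) = f a * g c := by
      rw [← hS.inl_mul_inr, map_mul, Φ_inl, Φ_inr]
    have kills : ∀ z ∈ smashGens P, Φ (S.toAlg z) = 0 := by
      rintro _ ⟨i, j, a, b, ha, hb, rfl⟩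
      simp only [map_sub, map_smul, Φ_tmul, h.map_one, one_mul, h.lie_mul ha hb]
      abel
    obtain ⟨Ψ, hΨ⟩ := hR.exists_algHom (hI.trans_le (idealGen_le_ker kills))
    exact ⟨Ψ, fun a => (hΨ _).trans (Φ_inl a), fun a => (hΨ _).trans (Φ_inr a)⟩

theorem isUEnv_smashQuot (hEU : IsULieDGA P.toLie EU) (hS : IsSmash P EU S)
    (hI : I = idealGen S (smashGens P)) (hR : IsQuotDGA S I R) :
    IsUEnv P R (I.mkQ ∘ₗ smashInl P) (I.mkQ ∘ₗ smashInr P ∘ₗ uGen P.toLie) :=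
  (isPoissonEnvelope_smashQuot hS hI hR).isUEnv
    (.comp hR.isDGAHom_mkQ (hS.isCochainMap_smashInl hEU))
    (.comp hR.isDGAHom_mkQ (hS.isCochainMap_smashInr_uGen hEU))

end QuotientOfSmashProduct

/-- `A^e ≅ A^E` as differential graded algebras, via the map determined by
`m_a ↦ class of a#1` and `h_a ↦ class of 1#a`. -/
theorem stmt_9 (k : Type u) [Field k] (M : Type u) [AddCommGroup M] [Module k M]
    (P : DGPAOn k M)
    (E : DGAOn k (Env P)) (hE : IsEnvDGA P E)
    (EU : DGAOn k (ULie P.toLie)) (hEU : IsULieDGA P.toLie EU)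
    (S : DGAOn k (M ⊗[k] ULie P.toLie)) (hS : IsSmash P EU S)
    (I : Submodule k (M ⊗[k] ULie P.toLie)) (hI : I = idealGen S (smashGens P))
    (R : DGAOn k ((M ⊗[k] ULie P.toLie) ⧸ I)) (hR : IsQuotDGA S I R) :
    ∃ φ : Env P →ₗ[k] (M ⊗[k] ULie P.toLie) ⧸ I,
      IsDGAHom E R φ ∧ Function.Bijective φ ∧
      (∀ a : M, φ (mgen P a) = I.mkQ (a ⊗ₜ[k] (1 : ULie P.toLie))) ∧
      (∀ a : M, φ (hgen P a) = I.mkQ (P.one ⊗ₜ[k] uGen P.toLie a)) := by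
  exact hE.isUEnv.exists_bijective (isUEnv_smashQuot hEU hS hI hR)

end DGPaper

end
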